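/- arXiv:1510.09043 — 2 statements merged into one kernel-verified Lean document; each statement's English description precedes it below -/
import Mathlib

section
/- Let X = Spec(B) be given by a local presentation attached to the multiplicity as in the context, with elimination algebra G_X^{(d)} over S and closed point ξ. Then ord(G_X^{(d)}) equals the minimum, over all field extensions K of k and all arcs φ : B → K[[t]] in X through ξ (with all φ(θ_i) and φ(z_j) nonzero), of the quotient r_{X,φ}/ord(φ). In particular r_{X,φ}/ord(φ) ≥ ord(G_X^{(d)}) for every such arc, and there exists an arc attaining the value ord(G_X^{(d)}), so that the infimum is a minimum (Main Theorem). -/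
open Polynomial
open scoped ENNReal

set_option linter.overlappingInstances false
noncomputable section

namespace NashMult

/-- The `m`-adic order `ν(f)` of an element `f` of a ring: the largest `n` with `f ∈ m ^ n`. -/
def adicOrder {R : Type*} [CommRing R] (m : Ideal R) (f : R) : ℕ :=
  sSup {n : ℕ | f ∈ m ^ n}

/-- A subalgebra `G ⊆ R[W]` is *graded* if it is spanned by its "monomials", i.e. it is closed
under taking homogeneous components.  This is the condition expressing that `G = ⊕ I_l W^l`
for a family of ideals `I_l` (with `I_0 = R` and `I_i · I_j ⊆ I_{i+j}` automatic). -/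
def Graded {R : Type*} [CommRing R] (G : Subalgebra R (Polynomial R)) : Prop :=
  ∀ p ∈ G, ∀ n : ℕ, (C (p.coeff n) * X ^ n : Polynomial R) ∈ G

/-- A *Rees algebra* over `R`: a finitely generated graded subalgebra of `R[W]`. -/
def IsReesAlgebra {R : Type*} [CommRing R] (G : Subalgebra R (Polynomial R)) : Prop :=
  G.FG ∧ Graded G

/-- The order of (the Rees algebra) `G` at the closed point of the local ring `(R, m)`:
`ord(G) = inf { ν(f)/n : f W^n a homogeneous element of G, n ≥ 1, f ≠ 0 }`
(with value `∞` for the empty infimum). -/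
def reesOrder {R : Type*} [CommRing R] (m : Ideal R) (G : Subalgebra R (Polynomial R)) : ℝ≥0∞ :=
  sInf {q : ℝ≥0∞ | ∃ (f : R) (n : ℕ), f ≠ 0 ∧ 1 ≤ n ∧ (C f * X ^ n : Polynomial R) ∈ G ∧
    q = (adicOrder m f : ℝ≥0∞) / (n : ℝ≥0∞)}

/-- `G = ⊕ I_l W^l` is *differentially closed* relative to a family `D` of derivations if
`I_{l+1} ⊆ I_l` and `D_j (I_l) ⊆ I_{l-1}` for all `l ≥ 1` and all `j`. -/
def DiffClosed {k R ι : Type*} [CommRing k] [CommRing R] [Algebra k R]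
    (D : ι → Derivation k R R) (G : Subalgebra R (Polynomial R)) : Prop :=
  (∀ (f : R) (l : ℕ), 1 ≤ l → (C f * X ^ (l + 1) : Polynomial R) ∈ G →
      (C f * X ^ l : Polynomial R) ∈ G) ∧
  (∀ (f : R) (l : ℕ) (j : ι), (C f * X ^ (l + 1) : Polynomial R) ∈ G →
      (C (D j f) * X ^ l : Polynomial R) ∈ G)

/-- `Diff(M)`: the smallest graded differentially closed subalgebra of `R[W]` containing the
set `M`. -/
def diffClosure {k R ι : Type*} [CommRing k] [CommRing R] [Algebra k R]
    (D : ι → Derivation k R R) (M : Set (Polynomial R)) : Subalgebra R (Polynomial R) :=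
  sInf {G : Subalgebra R (Polynomial R) | M ⊆ ↑G ∧ Graded G ∧ DiffClosed D G}

/-- The image `ψ(G)` of a Rees algebra `G` over `R` under a homomorphism (arc) `ψ : R → K⟦t⟧`:
the Rees algebra over `K⟦t⟧` generated by all `ψ(g) W^l` for `g W^l` a homogeneous element of
`G` with `ψ(g) ≠ 0`. -/
def arcImage {R A : Type*} [CommRing R] [CommRing A] (ψ : R → A)
    (G : Subalgebra R (Polynomial R)) : Subalgebra A (Polynomial A) :=
  Algebra.adjoin A {p : Polynomial A | ∃ (g : R) (l : ℕ),
    (C g * X ^ l : Polynomial R) ∈ G ∧ ψ g ≠ 0 ∧ p = C (ψ g) * X ^ l}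

/-- The order `ord(ψ)` of an arc `ψ : R → K⟦t⟧`: the largest `n` such that
`ψ(m) ⊆ t^n` (`t` being the ideal `tI`). -/
def homOrd {R A : Type*} [CommRing R] [CommRing A] (m : Ideal R) (tI : Ideal A)
    (ψ : R → A) : ℕ :=
  sSup {n : ℕ | ∀ s ∈ m, ψ s ∈ tI ^ n}

/-- The maximal ideal `(t)` of `K⟦t⟧`. -/
def tId (K : Type*) [CommRing K] : Ideal (PowerSeries K) :=
  Ideal.span {(PowerSeries.X : PowerSeries K)}

/-- The `t`-adic order on `K⟦t⟧`. -/
def tOrd {K : Type*} [CommRing K] (g : PowerSeries K) : ℕ :=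
  adicOrder (tId K) g

/-- The family of ideals `I_l` of the graded algebra `G = ⊕ I_l W^l`. -/
def idealFam {R : Type*} [CommRing R] (G : Subalgebra R (Polynomial R)) (l : ℕ) : Ideal R :=
  Submodule.comap (Polynomial.monomial l : R →ₗ[R] Polynomial R) (Subalgebra.toSubmodule G)

/-- The closed point of the local ring `(R, m)` belongs to the singular locus of
`G = ⊕ I_l W^l`, i.e. `ν(I_l) ≥ l` for all `l ≥ 1`. -/
def SingFam {R : Type*} [CommRing R] (m : Ideal R) (I : ℕ → Ideal R) : Prop :=
  ∀ l : ℕ, 1 ≤ l → I l ≤ m ^ l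

/-- The transform `⊕ (I_l · T^{-l}) W^l` of a Rees algebra `⊕ I_l W^l` over a DVR with
uniformizer `T` (when the closed point lies in the singular locus, `I_l ⊆ (T^l)` and
`I_l · T^{-l} = (I_l : (T^l))`). -/
def transformFam {R : Type*} [CommRing R] (T : R) (I : ℕ → Ideal R) : ℕ → Ideal R :=
  fun l => (I l).colon (Ideal.span {T ^ l})

/-- The persistance: the least number `κ` of transforms needed so that the closed point no
longer lies in the singular locus. -/
def persist {R : Type*} [CommRing R] (m : Ideal R) (T : R)
    (G : Subalgebra R (Polynomial R)) : ℕ :=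
  sInf {κ : ℕ | ¬ SingFam m ((transformFam T)^[κ] (idealFam G))}

/-- The set of elements of a ring integral over a subset `s` (monic equation with
coefficients in `s`). -/
def intClos {A : Type*} [CommRing A] (s : Set A) : Set A :=
  {p : A | ∃ q : Polynomial A, q.Monic ∧ (∀ n, q.coeff n ∈ s) ∧ Polynomial.eval p q = 0}


/-- The monic polynomial `f = x^b + B_{b-2} x^{b-2} + ⋯ + B_1 x + B_0` with coefficients
`B_j = Bc j` (only `j ≤ b - 2` is relevant). -/
def minPolyOf {S : Type*} [CommRing S] (b : ℕ) (Bc : ℕ → S) : Polynomial S :=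
  Polynomial.X ^ b + ∑ j ∈ Finset.range (b - 1), Polynomial.C (Bc j) * Polynomial.X ^ j


/-- The maximal ideal `(z_1, …, z_d)` of the polynomial ring `k[z_1, …, z_d]`
(the kernel of evaluation at the origin). -/
def mPoly (k : Type) [Field k] (d : ℕ) : Ideal (MvPolynomial (Fin d) k) :=
  RingHom.ker (MvPolynomial.aeval (fun _ => (0 : k)) : MvPolynomial (Fin d) k →ₐ[k] k)

instance {k : Type} [Field k] {d : ℕ} : (mPoly k d).IsMaximal :=
  RingHom.ker_isMaximal_of_surjective _ (fun a => ⟨MvPolynomial.C a, by simp⟩)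

instance {k : Type} [Field k] {d : ℕ} : (mPoly k d).IsPrime :=
  (inferInstance : (mPoly k d).IsMaximal).isPrime

/-- `IsSLoc k d S` says that `S` is (identified with) the localization of `k[z_1, …, z_d]`
at the maximal ideal `(z_1, …, z_d)`. -/
abbrev IsSLoc (k : Type) [Field k] (d : ℕ) (S : Type) [CommRing S]
    [Algebra (MvPolynomial (Fin d) k) S] : Prop :=
  IsLocalization.AtPrime S (mPoly k d)

/-- The element `z_j` of `S`. -/
def zvar (k : Type) [Field k] (d : ℕ) (S : Type) [CommRing S]
    [Algebra (MvPolynomial (Fin d) k) S] (j : Fin d) : S :=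
  algebraMap (MvPolynomial (Fin d) k) S (MvPolynomial.X j)

/-- The maximal ideal `m = (z_1, …, z_d)` of the local ring `S`. -/
def mS (k : Type) [Field k] (d : ℕ) (S : Type) [CommRing S]
    [Algebra (MvPolynomial (Fin d) k) S] : Ideal S :=
  (mPoly k d).map (algebraMap (MvPolynomial (Fin d) k) S)


variable (k : Type) [Field k] (d : ℕ)
variable (S : Type) [CommRing S] [Algebra (MvPolynomial (Fin d) k) S] [Algebra k S]

/-- A local presentation, attached to the multiplicity, of a `d`-dimensional variety
`X = Spec B` at the closed point `ξ`:  `B = S[x_1,…,x_{n-d}]/I` with `I` prime,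
`S → B` injective and finite, and the minimal polynomial over `Frac S` of the class `θ_i`
of `x_i` is `f_i = x_i^{b_i} + B_{i,b_i-2} x_i^{b_i-2} + ⋯ + B_{i,0}` with `b_i ≥ 2`,
`B_{i,j} ∈ m^{b_i - j}`, and some `B_{i,j} ≠ 0`. -/
structure Presentation [IsDomain S] : Type 1 where
  /-- the number `n - d ≥ 1` of extra variables `x_i` -/
  e : ℕ
  he : 1 ≤ e
  /-- the prime ideal `I ⊆ S[x_1,…,x_{n-d}]` defining `X` -/
  I : Ideal (MvPolynomial (Fin e) S)
  hprime : I.IsPrime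
  hinj : Function.Injective (algebraMap S (MvPolynomial (Fin e) S ⧸ I))
  hfinite : Module.Finite S (MvPolynomial (Fin e) S ⧸ I)
  /-- the degrees `b_i ≥ 2` -/
  b : Fin e → ℕ
  hb : ∀ i, 2 ≤ b i
  /-- the coefficients `B_{i,j}` (only `j ≤ b_i - 2` is relevant) -/
  Bc : Fin e → ℕ → S
  /-- `f_i(θ_i) = 0` -/
  hroot : ∀ i, Polynomial.aeval (Ideal.Quotient.mk I (MvPolynomial.X i))
    (minPolyOf (b i) (Bc i)) = 0
  /-- `f_i` is irreducible over `Frac S`, i.e. it is the minimal polynomial of `θ_i` -/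
  hirr : ∀ i, Irreducible ((minPolyOf (b i) (Bc i)).map (algebraMap S (FractionRing S)))
  /-- `B_{i,j} ∈ m^{b_i - j}` -/
  hmem : ∀ i, ∀ j ≤ b i - 2, Bc i j ∈ (mS k d S) ^ (b i - j)
  /-- some `B_{i,j} ≠ 0` -/
  hnz : ∃ i, ∃ j ≤ b i - 2, Bc i j ≠ 0

variable [IsDomain S]
variable {k d S}

/-- The coordinate ring `B = S[x_1,…,x_{n-d}]/I` of `X`. -/
abbrev BRing (P : Presentation k d S) : Type :=
  MvPolynomial (Fin P.e) S ⧸ P.I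

/-- The class `θ_i` of `x_i` in `B`. -/
def theta (P : Presentation k d S) (i : Fin P.e) : BRing P :=
  Ideal.Quotient.mk P.I (MvPolynomial.X i)

/-- The elimination algebra in dimension `d`:
`G_X^{(d)} = Diff( S[ B_{i,j} W^{b_i - j} : i, j ] )`, a Rees algebra over `S`. -/
def elimAlg (P : Presentation k d S) (D : Fin d → Derivation k S S) :
    Subalgebra S (Polynomial S) :=
  diffClosure D {p : Polynomial S | ∃ i, ∃ j ≤ P.b i - 2,
    p = Polynomial.C (P.Bc i j) * Polynomial.X ^ (P.b i - j)}

/-- An arc in `X` through `ξ` (with the required nonvanishing): a `k`-algebra homomorphism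
`φ : B → K⟦t⟧` sending the maximal ideal of `B` at `ξ` into `(t)`, with all `φ(θ_i)` and
`φ(z_j)` nonzero. -/
def IsArc (P : Presentation k d S) {K : Type} [Field K] [Algebra k K]
    (φ : BRing P →ₐ[k] PowerSeries K) : Prop :=
  (∀ s ∈ mS k d S, φ (algebraMap S (BRing P) s) ∈ tId K) ∧
  (∀ i, φ (theta P i) ∈ tId K) ∧
  (∀ i, φ (theta P i) ≠ 0) ∧
  (∀ j, φ (algebraMap S (BRing P) (zvar k d S j)) ≠ 0)

/-- The order of an arc: the minimum of the `t`-adic orders of the `φ(θ_i)` and the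
`φ(z_j)`. -/
def arcOrd (P : Presentation k d S) {K : Type} [Field K] [Algebra k K]
    (φ : BRing P →ₐ[k] PowerSeries K) : ℕ :=
  sInf ((Set.range fun i => tOrd (φ (theta P i))) ∪
    (Set.range fun j => tOrd (φ (algebraMap S (BRing P) (zvar k d S j)))))

/-- The contact algebra `G^{(1)}_{X_0,φ}`: the Rees algebra over `K⟦t⟧` generated by the
`φ(θ_i) W` together with all `φ(g) W^l` for `g W^l` a homogeneous element of `G_X^{(d)}`
with `φ(g) ≠ 0`. -/
def contactAlg (P : Presentation k d S) (D : Fin d → Derivation k S S)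
    {K : Type} [Field K] [Algebra k K] (φ : BRing P →ₐ[k] PowerSeries K) :
    Subalgebra (PowerSeries K) (Polynomial (PowerSeries K)) :=
  Algebra.adjoin (PowerSeries K)
    ((Set.range fun i => (Polynomial.C (φ (theta P i)) * Polynomial.X :
        Polynomial (PowerSeries K))) ∪
      {p : Polynomial (PowerSeries K) | ∃ (g : S) (l : ℕ),
        (Polynomial.C g * Polynomial.X ^ l : Polynomial S) ∈ elimAlg P D ∧
        φ (algebraMap S (BRing P) g) ≠ 0 ∧
        p = Polynomial.C (φ (algebraMap S (BRing P) g)) * Polynomial.X ^ l})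

/-- The order of contact `r_{X,φ}` of the arc `φ` with `Max mult(X)`: the order of the
contact algebra at the closed point of `K⟦t⟧`. -/
def rOrd (P : Presentation k d S) (D : Fin d → Derivation k S S)
    {K : Type} [Field K] [Algebra k K] (φ : BRing P →ₐ[k] PowerSeries K) : ℝ≥0∞ :=
  reesOrder (tId K) (contactAlg P D φ)

/-- The persistance `ρ_{X,φ}`: the least number of transforms of the contact algebra
(i.e. of point blow-ups directed by `φ`) needed to make the closed point leave the
singular locus, that is, to lower the Nash multiplicity. -/
def rho (P : Presentation k d S) (D : Fin d → Derivation k S S)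
    {K : Type} [Field K] [Algebra k K] (φ : BRing P →ₐ[k] PowerSeries K) : ℕ :=
  persist (tId K) (PowerSeries.X : PowerSeries K) (contactAlg P D φ)



theorem mem_tId_pow {K : Type*} [Field K] (f : PowerSeries K) (n : ℕ) :
    f ∈ tId K ^ n ↔ PowerSeries.X ^ n ∣ f := by
  rw [tId, Ideal.span_singleton_pow, Ideal.mem_span_singleton]

theorem bddAbove_tId {K : Type*} [Field K] {f : PowerSeries K} (hf : f ≠ 0) :
    ∀ n, f ∈ tId K ^ n → n ≤ f.order.toNat := by
  intro n hn
  rw [mem_tId_pow, PowerSeries.X_pow_dvd_iff] at hn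
  by_contra h
  exact PowerSeries.coeff_order hf (hn _ (by omega))

theorem le_adicOrder {R : Type*} [CommRing R] {m : Ideal R} {f : R} {n : ℕ}
    (hb : BddAbove {n : ℕ | f ∈ m ^ n}) (h : f ∈ m ^ n) : n ≤ adicOrder m f :=
  le_csSup hb h

theorem mem_pow_adicOrder {R : Type*} [CommRing R] (m : Ideal R) (f : R) :
    f ∈ m ^ (adicOrder m f) := by
  by_cases hb : BddAbove {n : ℕ | f ∈ m ^ n}
  · exact Nat.sSup_mem (s := {n : ℕ | f ∈ m ^ n}) ⟨0, by simp⟩ hb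
  · have : adicOrder m f = 0 := by
      rw [adicOrder, csSup_of_not_bddAbove hb]
      simp
    rw [this]; simp

theorem le_tOrd {K : Type*} [Field K] {f : PowerSeries K} (hf : f ≠ 0) {n : ℕ}
    (h : f ∈ tId K ^ n) : n ≤ tOrd f :=
  le_adicOrder ⟨_, fun _ hn => bddAbove_tId hf _ hn⟩ h

theorem tOrd_eq {K : Type*} [Field K] {n : ℕ} {u : PowerSeries K} (hu : IsUnit u) :
    tOrd (PowerSeries.X ^ n * u) = n := by
  have hne : PowerSeries.X ^ n * u ≠ 0 := mul_ne_zero (pow_ne_zero _ PowerSeries.X_ne_zero) hu.ne_zero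
  refine le_antisymm ?_ (le_tOrd hne ((mem_tId_pow _ _).2 (dvd_mul_right _ _)))
  have := (mem_tId_pow _ _).1 (mem_pow_adicOrder (tId K) (PowerSeries.X ^ n * u))
  rw [hu.dvd_mul_right] at this
  exact (pow_dvd_pow_iff PowerSeries.X_ne_zero PowerSeries.X_irreducible.not_isUnit).1 this

theorem mPoly_eq (k : Type) [Field k] (d : ℕ) :
    mPoly k d = MvPolynomial.idealOfVars (Fin d) k := by
  ext p
  rw [← pow_one (MvPolynomial.idealOfVars (Fin d) k), MvPolynomial.mem_pow_idealOfVars_iff', mPoly,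
    RingHom.mem_ker]
  have : (MvPolynomial.aeval (fun _ => (0 : k)) : MvPolynomial (Fin d) k →ₐ[k] k) p
      = MvPolynomial.coeff 0 p := by
    simp [MvPolynomial.aeval_zero', MvPolynomial.constantCoeff_eq]
  change (MvPolynomial.aeval (fun _ => (0 : k)) : MvPolynomial (Fin d) k →ₐ[k] k) p = 0 ↔ _
  rw [this]
  constructor
  · intro h x hx
    have : x = 0 := by
      rw [← Finsupp.degree_eq_zero_iff]; omega
    rw [this, h]
  · intro h; exact h 0 (by simp)

theorem coeff_arc {k K : Type*} [Field k] [Field K] [Algebra k K] {d : ℕ} (a : Fin d → K)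
    (p : MvPolynomial (Fin d) k) (n : ℕ) :
    PowerSeries.coeff n (MvPolynomial.aeval (fun j => PowerSeries.C (a j) * PowerSeries.X) p) =
      MvPolynomial.aeval a (MvPolynomial.homogeneousComponent n p) := by
  induction p using MvPolynomial.induction_on' with
  | add p q hp hq => simp only [map_add, hp, hq]
  | monomial s c =>
    have h1 : MvPolynomial.aeval (fun j => PowerSeries.C (a j) * PowerSeries.X)
        (MvPolynomial.monomial s c) = PowerSeries.C (MvPolynomial.aeval a (MvPolynomial.monomial s c))
          * PowerSeries.X ^ s.degree := by
      rw [MvPolynomial.aeval_monomial, MvPolynomial.aeval_monomial, map_mul, mul_assoc,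
        PowerSeries.algebraMap_apply]
      congr 1
      rw [Finsupp.prod, Finsupp.prod, map_prod, Finsupp.degree_apply, ← Finset.prod_pow_eq_pow_sum,
        ← Finset.prod_mul_distrib]
      simp [mul_pow]
    rw [h1, PowerSeries.coeff_C_mul, PowerSeries.coeff_X_pow]
    by_cases h : n = s.degree
    · subst h
      rw [MvPolynomial.homogeneousComponent_eq_self (MvPolynomial.isHomogeneous_monomial c rfl)]
      simp
    · rw [MvPolynomial.homogeneousComponent_of_mem (n := s.degree)
        (MvPolynomial.isHomogeneous_monomial c rfl), if_neg h]
      simp [h]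

theorem exists_base_arc
    (k : Type) [Field k] [CharZero k] (d : ℕ)
    (S : Type) [CommRing S] [IsDomain S] [Algebra (MvPolynomial (Fin d) k) S]
    [Algebra k S] [IsScalarTower k (MvPolynomial (Fin d) k) S] [IsSLoc k d S]
    (K : Type) [Field K] [Algebra k K] (T : Finset S) (hT : ∀ s ∈ T, s ≠ 0) :
    ∃ f : S →+* PowerSeries K, (∀ c : k, f (algebraMap k S c) = PowerSeries.C (algebraMap k K c)) ∧
      (∀ j, ∃ a : K, a ≠ 0 ∧ f (zvar k d S j) = PowerSeries.C a * PowerSeries.X) ∧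
      ∀ s ∈ T, ∃ (n : ℕ) (u : PowerSeries K), IsUnit u ∧ s ∈ mS k d S ^ n ∧
        f s = PowerSeries.X ^ n * u := by
  classical
  have hrep : ∀ s : S, ∃ (p u : MvPolynomial (Fin d) k), u ∉ mPoly k d ∧
      s * algebraMap _ S u = algebraMap _ S p := by
    intro s
    obtain ⟨⟨p, u⟩, h⟩ := IsLocalization.surj (mPoly k d).primeCompl s
    exact ⟨p, u, u.2, h⟩
  choose p u hu hpu using hrep
  have hunit : ∀ v : MvPolynomial (Fin d) k, v ∉ mPoly k d → IsUnit (algebraMap _ S v) :=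
    fun v hv => IsLocalization.map_units S (⟨v, hv⟩ : (mPoly k d).primeCompl)
  have hp0 : ∀ s ∈ T, p s ≠ 0 := by
    intro s hs h
    have h1 := hpu s
    rw [h, map_zero, mul_eq_zero] at h1
    rcases h1 with h1 | h1
    · exact hT s hs h1
    · exact (hunit _ (hu s)).ne_zero h1
  have hn : ∀ s ∈ T, ∃ n, MvPolynomial.homogeneousComponent n (p s) ≠ 0 ∧
      ∀ l < n, MvPolynomial.homogeneousComponent l (p s) = 0 := by
    intro s hs
    have hex : ∃ n, MvPolynomial.homogeneousComponent n (p s) ≠ 0 := by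
      by_contra! h
      apply hp0 s hs
      rw [← MvPolynomial.sum_homogeneousComponent (p s)]
      exact Finset.sum_eq_zero fun i _ => h i
    exact ⟨Nat.find hex, Nat.find_spec hex, fun l hl => by simpa using Nat.find_min hex hl⟩
  choose! n hn1 hn2 using hn
  obtain ⟨a, ha⟩ : ∃ a : Fin d → k, MvPolynomial.eval a
      ((∏ s ∈ T, MvPolynomial.homogeneousComponent (n s) (p s)) * ∏ j, MvPolynomial.X j) ≠ 0 := by
    by_contra! h
    have h0 : ((∏ s ∈ T, MvPolynomial.homogeneousComponent (n s) (p s)) *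
      ∏ j : Fin d, MvPolynomial.X j : MvPolynomial (Fin d) k) = 0 :=
      MvPolynomial.funext fun x => by rw [h x, map_zero]
    rw [mul_eq_zero, Finset.prod_eq_zero_iff, Finset.prod_eq_zero_iff] at h0
    rcases h0 with ⟨s, hs, h0⟩ | ⟨j, -, h0⟩
    · exact hn1 s hs h0
    · exact MvPolynomial.X_ne_zero j h0
  rw [map_mul, map_prod, map_prod] at ha
  have ha1 := fun s hs => (Finset.prod_ne_zero_iff.1 (left_ne_zero_of_mul ha)) s hs
  have ha2 := fun j => (Finset.prod_ne_zero_iff.1 (right_ne_zero_of_mul ha)) j (Finset.mem_univ j)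
  let F : MvPolynomial (Fin d) k →ₐ[k] PowerSeries K :=
    MvPolynomial.aeval (fun j => PowerSeries.C (algebraMap k K (a j)) * PowerSeries.X)
  have hcoef : ∀ q m, PowerSeries.coeff m (F q) =
      algebraMap k K (MvPolynomial.eval a (MvPolynomial.homogeneousComponent m q)) := by
    intro q m
    rw [coeff_arc]
    exact MvPolynomial.aeval_algebraMap_apply (A := k) K a _
  have hFu : ∀ v, v ∉ mPoly k d → IsUnit (F v) := by
    intro v hv
    rw [PowerSeries.isUnit_iff_constantCoeff, isUnit_iff_ne_zero,
      ← PowerSeries.coeff_zero_eq_constantCoeff_apply, hcoef, MvPolynomial.homogeneousComponent_zero]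
    simp only [MvPolynomial.eval_C, ne_eq, map_eq_zero]
    intro h
    apply hv
    rw [mPoly, RingHom.mem_ker]
    simpa [MvPolynomial.aeval_zero', MvPolynomial.constantCoeff_eq] using h
  let f : S →+* PowerSeries K := IsLocalization.lift (M := (mPoly k d).primeCompl)
    (g := F.toRingHom) (fun y => hFu y.1 y.2)
  have hf : ∀ q, f (algebraMap _ S q) = F q := fun q => IsLocalization.lift_eq _ q
  refine ⟨f, ?_, ?_, ?_⟩
  · intro c
    rw [IsScalarTower.algebraMap_apply k (MvPolynomial (Fin d) k) S, hf, AlgHom.commutes,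
      PowerSeries.algebraMap_apply]
  · intro j
    refine ⟨algebraMap k K (a j), ?_, ?_⟩
    · have := ha2 j
      simpa using this
    · rw [zvar, hf]; simp [F]
  · intro s hs
    have hdvd : PowerSeries.X ^ n s ∣ F (p s) := by
      rw [PowerSeries.X_pow_dvd_iff]
      intro m hm
      rw [hcoef, hn2 s hs m hm]; simp
    obtain ⟨v, hv⟩ := hdvd
    have hvu : IsUnit v := by
      rw [PowerSeries.isUnit_iff_constantCoeff, isUnit_iff_ne_zero]
      have h1 := hcoef (p s) (n s)
      rw [hv, PowerSeries.coeff_X_pow_mul', if_pos le_rfl, Nat.sub_self,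
        PowerSeries.coeff_zero_eq_constantCoeff_apply] at h1
      rw [h1]
      simpa using ha1 s hs
    obtain ⟨w, hw⟩ := hFu _ (hu s)
    refine ⟨n s, v * ↑w⁻¹, hvu.mul w⁻¹.isUnit, ?_, ?_⟩
    · have h1 : p s ∈ mPoly k d ^ n s := by
        rw [mPoly_eq, MvPolynomial.mem_pow_idealOfVars_iff']
        intro x hx
        have := hn2 s hs _ hx
        have h2 := congrArg (MvPolynomial.coeff x) this
        rwa [MvPolynomial.coeff_homogeneousComponent, if_pos rfl, MvPolynomial.coeff_zero] at h2
      have h2 := Ideal.mem_map_of_mem (algebraMap _ S) h1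
      rw [Ideal.map_pow, ← hpu s] at h2
      exact (Ideal.mul_unit_mem_iff_mem _ (hunit _ (hu s))).1 h2
    · have h1 := congrArg f (hpu s)
      rw [map_mul, hf, hf, hv, ← hw] at h1
      rw [← mul_assoc, ← h1, mul_assoc, Units.mul_inv, mul_one]

theorem bddAbove_mS
    (k : Type) [Field k] [CharZero k] (d : ℕ)
    (S : Type) [CommRing S] [IsDomain S] [Algebra (MvPolynomial (Fin d) k) S]
    [Algebra k S] [IsScalarTower k (MvPolynomial (Fin d) k) S] [IsSLoc k d S] {s : S} (hs : s ≠ 0) :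
    BddAbove {n : ℕ | s ∈ mS k d S ^ n} := by
  obtain ⟨f, -, hz, hT⟩ := exists_base_arc k d S k {s} (by simpa using hs)
  obtain ⟨n, u, hu, -, hfs⟩ := hT s (by simp)
  have hm : mS k d S ≤ (tId k).comap f := by
    rw [mS, mPoly_eq, MvPolynomial.idealOfVars, Ideal.map_span, Ideal.span_le]
    rintro _ ⟨_, ⟨j, rfl⟩, rfl⟩
    obtain ⟨a, -, h⟩ := hz j
    rw [zvar] at h
    rw [SetLike.mem_coe, Ideal.mem_comap, h]
    exact Ideal.mul_mem_left _ _ (Ideal.mem_span_singleton_self _)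
  have hne : f s ≠ 0 := by
    rw [hfs]; exact mul_ne_zero (pow_ne_zero _ PowerSeries.X_ne_zero) hu.ne_zero
  refine ⟨_, fun l hl => bddAbove_tId hne l ?_⟩
  exact Ideal.le_comap_pow f l (Ideal.pow_right_mono hm l hl)
theorem exists_expansion_hom {K W : Type*} [Field K] [CommRing W] (p : W) (hp : p ∈ nonZeroDivisors W)
    (ι : K →+* W) (hex : ∀ w, ∃ c, p ∣ w - ι c) (huniq : ∀ c, p ∣ ι c → c = 0) :
    ∃ h : W →+* PowerSeries K, (∀ c, h (ι c) = PowerSeries.C c) ∧ h p = PowerSeries.X := by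
  choose r s hrs using hex
  have key : ∀ w c v, w = ι c + p * v → r w = c ∧ s w = v := by
    intro w c v hw
    have h1 := hrs w
    have hc : r w = c := by
      have : r w - c = 0 := huniq _ ⟨v - s w, by rw [map_sub]; linear_combination hw - h1⟩
      exact sub_eq_zero.mp this
    refine ⟨hc, ?_⟩
    have h2 : (s w - v) * p = 0 := by rw [hc] at h1; linear_combination hw - h1
    exact sub_eq_zero.mp ((mem_nonZeroDivisors_iff.mp hp).2 _ h2)
  have exp : ∀ w, w = ι (r w) + p * s w := fun w => by linear_combination hrs w
  let h : W → PowerSeries K := fun w => PowerSeries.mk fun n => r (s^[n] w)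
  have h0 : ∀ w, PowerSeries.coeff 0 (h w) = r w := fun w => by simp [h]
  have hS : ∀ w n, PowerSeries.coeff (n+1) (h w) = PowerSeries.coeff n (h (s w)) := fun w n => by
    simp [h]
  have hrec : ∀ w, h w = PowerSeries.C (r w) + PowerSeries.X * h (s w) := by
    intro w; ext n
    cases n with
    | zero => rw [h0]; simp
    | succ n => rw [hS]; simp [PowerSeries.coeff_succ_X_mul]
  have hadd : ∀ v w, h (v + w) = h v + h w := by
    have : ∀ n v w, PowerSeries.coeff n (h (v + w)) = PowerSeries.coeff n (h v + h w) := by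
      intro n
      induction n with
      | zero =>
        intro v w
        obtain ⟨e1, e2⟩ := key (v + w) (r v + r w) (s v + s w)
          (by rw [map_add]; linear_combination exp v + exp w)
        rw [map_add, h0, h0, h0, e1]
      | succ n ih =>
        intro v w
        obtain ⟨e1, e2⟩ := key (v + w) (r v + r w) (s v + s w)
          (by rw [map_add]; linear_combination exp v + exp w)
        rw [map_add, hS, hS, hS, e2, ih, map_add]
    intro v w; ext n; exact this n v w
  have hz : h 0 = 0 := by simpa using hadd 0 0
  have hι : ∀ c, h (ι c) = PowerSeries.C c := by
    intro c
    obtain ⟨e1, e2⟩ := key (ι c) c 0 (by ring)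
    rw [hrec, e1, e2, hz]; simp
  have hmul : ∀ v w, h (v * w) = h v * h w := by
    have : ∀ n v w, PowerSeries.coeff n (h (v * w)) = PowerSeries.coeff n (h v * h w) := by
      intro n
      induction n with
      | zero =>
        intro v w
        obtain ⟨e1, e2⟩ := key (v * w) (r v * r w) (ι (r v) * s w + s v * w)
          (by rw [map_mul]; linear_combination w * exp v + ι (r v) * exp w)
        rw [h0, e1, hrec v, hrec w]; simp
      | succ n ih =>
        intro v w
        obtain ⟨e1, e2⟩ := key (v * w) (r v * r w) (ι (r v) * s w + s v * w)
          (by rw [map_mul]; linear_combination w * exp v + ι (r v) * exp w)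
        have e3 : h v * h w = PowerSeries.C (r v) * PowerSeries.C (r w)
          + PowerSeries.X * (PowerSeries.C (r v) * h (s w) + h (s v) * h w) := by
          conv_lhs => rw [hrec v, add_mul]
          conv_lhs => enter [1]; rw [hrec w]
          ring
        rw [hS, e2, hadd, map_add, ih, ih, e3, hι, ← map_mul, map_add, PowerSeries.coeff_succ_X_mul]
        simp
    intro v w; ext n; exact this n v w
  refine ⟨{ toFun := h, map_one' := ?_, map_mul' := hmul, map_zero' := hz, map_add' := hadd }, hι, ?_⟩
  · rw [← map_one ι, hι, map_one]
  · obtain ⟨e1, e2⟩ := key p 0 1 (by simp)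
    show h p = _
    rw [hrec, e1, e2, ← map_one ι, hι]; simp

theorem exists_dedekind_hom {K C : Type} [Field K] [IsAlgClosed K] [CommRing C] [IsDomain C]
    [IsDedekindDomain C] [Algebra (PowerSeries K) C] [Algebra.IsIntegral (PowerSeries K) C]
    (hinj : Function.Injective (algebraMap (PowerSeries K) C)) :
    ∃ (h : C →+* PowerSeries K) (e : ℕ) (u : PowerSeries K), 1 ≤ e ∧ IsUnit u ∧
      (∀ c, h (algebraMap (PowerSeries K) C (PowerSeries.C c)) = PowerSeries.C c) ∧
      h (algebraMap (PowerSeries K) C PowerSeries.X) = PowerSeries.X ^ e * u := by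
  obtain ⟨M, hM⟩ := Ideal.exists_maximal C
  have hc : (M.comap (algebraMap (PowerSeries K) C)).IsMaximal :=
    Ideal.isMaximal_comap_of_isIntegral_of_isMaximal M
  have hc' := IsLocalRing.eq_maximalIdeal hc
  have hX : algebraMap _ C (PowerSeries.X : PowerSeries K) ∈ M := by
    rw [← Ideal.mem_comap, hc', PowerSeries.maximalIdeal_eq_span_X]
    exact Ideal.mem_span_singleton_self _
  have hX0 : algebraMap _ C (PowerSeries.X : PowerSeries K) ≠ 0 := by
    rw [Ne, map_eq_zero_iff _ hinj]; exact PowerSeries.X_ne_zero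
  have hMb : M ≠ ⊥ := by rintro rfl; exact hX0 (by simpa using hX)
  let W := Localization.AtPrime M
  have : IsDiscreteValuationRing W :=
    IsLocalization.AtPrime.isDiscreteValuationRing_of_dedekind_domain C hMb W
  obtain ⟨p, hp⟩ := IsDiscreteValuationRing.exists_irreducible W
  have hpm : IsLocalRing.maximalIdeal W = Ideal.span {p} := hp.maximalIdeal_eq
  let ι0 : K →+* C := (algebraMap (PowerSeries K) C).comp PowerSeries.C
  have hres : Function.Surjective ((Ideal.Quotient.mk M).comp ι0) := by
    let : Algebra K (C ⧸ M) := ((Ideal.Quotient.mk M).comp ι0).toAlgebra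
    have : Algebra.IsIntegral K (C ⧸ M) := by
      constructor
      intro x
      obtain ⟨x, rfl⟩ := Ideal.Quotient.mk_surjective x
      obtain ⟨f, hf, hfx⟩ := Algebra.IsIntegral.isIntegral (R := PowerSeries K) x
      refine ⟨f.map PowerSeries.constantCoeff, hf.map _, ?_⟩
      rw [Polynomial.eval₂_map]
      have : (algebraMap K (C ⧸ M)).comp PowerSeries.constantCoeff
          = (Ideal.Quotient.mk M).comp (algebraMap (PowerSeries K) C) := by
        ext g
        show Ideal.Quotient.mk M (algebraMap _ _ (PowerSeries.C (PowerSeries.constantCoeff g))) =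
          Ideal.Quotient.mk M (algebraMap _ _ g)
        rw [Ideal.Quotient.eq, ← map_sub, ← Ideal.mem_comap, hc', PowerSeries.maximalIdeal_eq_span_X,
          Ideal.mem_span_singleton, PowerSeries.X_dvd_iff]
        simp
      rw [this, ← Polynomial.hom_eval₂, hfx, map_zero]
    have : Field (C ⧸ M) := Ideal.Quotient.field M
    exact (IsAlgClosed.algebraMap_bijective_of_isIntegral (k := K) (K := C ⧸ M)).2
  have hpC : ∀ x : C, p ∣ algebraMap C W x ↔ x ∈ M := by
    intro x
    rw [← Ideal.mem_span_singleton, ← hpm]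
    exact IsLocalization.AtPrime.to_map_mem_maximal_iff W M x
  obtain ⟨h, hι, hhp⟩ := exists_expansion_hom p (mem_nonZeroDivisors_of_ne_zero hp.ne_zero)
    ((algebraMap C W).comp ι0) (by
      intro w
      obtain ⟨y, hy⟩ := (IsLocalization.AtPrime.equivQuotMaximalIdeal M W).surjective
        (Ideal.Quotient.mk _ w)
      obtain ⟨c, rfl⟩ := hres y
      refine ⟨c, ?_⟩
      rw [← Ideal.mem_span_singleton, ← hpm, ← Ideal.Quotient.eq, ← hy]
      simp [IsLocalization.AtPrime.equivQuotMaximalIdeal_apply_mk]) (by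
      intro c hcp
      by_contra hne
      have := (hpC _).1 hcp
      have hu : IsUnit (ι0 c) := (isUnit_iff_ne_zero.mpr hne).map ι0
      exact hM.ne_top (Ideal.eq_top_of_isUnit_mem _ this hu))
  have hXW : algebraMap C W (algebraMap _ C (PowerSeries.X : PowerSeries K)) ≠ 0 := by
    rw [Ne, map_eq_zero_iff _ (IsLocalization.injective W M.primeCompl_le_nonZeroDivisors)]
    exact hX0
  obtain ⟨e, u, hu⟩ := IsDiscreteValuationRing.eq_unit_mul_pow_irreducible hXW hp
  refine ⟨h.comp (algebraMap C W), e, h u, ?_, u.isUnit.map h, fun c => hι c, ?_⟩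
  · rcases Nat.eq_zero_or_pos e with rfl | he
    · exfalso
      have := (hpC _).2 hX
      rw [hu, pow_zero, mul_one] at this
      exact hp.not_isUnit (isUnit_of_dvd_unit this u.isUnit)
    · exact he
  · rw [RingHom.comp_apply, hu, map_mul, map_pow, hhp, mul_comm]

theorem exists_hom_algClosed {S B Ω : Type} [CommRing S] [IsDomain S] [CommRing B] [Algebra S B]
    [Algebra.IsIntegral S B] (hinj : Function.Injective (algebraMap S B))
    [Field Ω] [IsAlgClosed Ω] (f : S →+* Ω) :
    ∃ ψ : B →+* Ω, ψ.comp (algebraMap S B) = f := by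
  let p := RingHom.ker f
  have : p.IsPrime := RingHom.ker_isPrime f
  obtain ⟨Q, hQ, hQp⟩ := Ideal.exists_ideal_over_prime_of_isIntegral p (⊥ : Ideal B) (by
    rw [← RingHom.ker_eq_comap_bot, (RingHom.injective_iff_ker_eq_bot _).1 hinj]; exact bot_le)
  obtain ⟨hQ1, hQ2⟩ := hQp
  have : Q.LiesOver p := ⟨hQ2.symm⟩
  have := hQ1
  let : Algebra (S ⧸ p) Ω := (Ideal.Quotient.lift p f (fun a ha => ha)).toAlgebra
  have : Module.IsTorsionFree (S ⧸ p) Ω := by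
    rw [Module.isTorsionFree_iff_algebraMap_injective, injective_iff_map_eq_zero]
    intro a ha
    obtain ⟨a, rfl⟩ := Ideal.Quotient.mk_surjective a
    exact Ideal.Quotient.eq_zero_iff_mem.mpr ha
  have : Module.IsTorsionFree (S ⧸ p) (B ⧸ Q) := by
    rw [Module.isTorsionFree_iff_algebraMap_injective, injective_iff_map_eq_zero]
    intro a ha
    obtain ⟨a, rfl⟩ := Ideal.Quotient.mk_surjective a
    rw [Ideal.Quotient.algebraMap_mk_of_liesOver, Ideal.Quotient.eq_zero_iff_mem] at ha
    exact Ideal.Quotient.eq_zero_iff_mem.mpr (hQ2 ▸ ha)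
  have : Algebra.IsIntegral (S ⧸ p) (B ⧸ Q) := inferInstance
  let l : (B ⧸ Q) →ₐ[S ⧸ p] Ω := IsAlgClosed.lift
  refine ⟨l.toRingHom.comp (Ideal.Quotient.mk Q), ?_⟩
  ext s
  have := l.commutes (Ideal.Quotient.mk p s)
  exact this

theorem exists_arc_extension {K S B : Type} [Field K] [IsAlgClosed K] [CharZero K]
    [CommRing S] [IsDomain S] [CommRing B] [Algebra S B]
    [Module.Finite S B] (hinj : Function.Injective (algebraMap S B))
    (f : S →+* PowerSeries K) :
    ∃ (ψ : B →+* PowerSeries K) (g : PowerSeries K →+* PowerSeries K) (e : ℕ) (u : PowerSeries K),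
      1 ≤ e ∧ IsUnit u ∧ ψ.comp (algebraMap S B) = g.comp f ∧
      (∀ c, g (PowerSeries.C c) = PowerSeries.C c) ∧
      g (PowerSeries.X) = PowerSeries.X ^ e * u := by
  let R := PowerSeries K
  let F := FractionRing R
  let Ω := AlgebraicClosure F
  have : CharZero R := charZero_of_injective_ringHom (PowerSeries.C_injective (R := K))
  have : CharZero F := charZero_of_injective_ringHom (IsFractionRing.injective R F)
  have : Algebra.IsIntegral S B := inferInstance
  obtain ⟨ψ0, hψ0⟩ := exists_hom_algClosed (Ω := Ω) hinj ((algebraMap R Ω).comp f)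
  obtain ⟨T, hT⟩ := Module.Finite.fg_top (R := S) (M := B)
  have hint : ∀ b, IsIntegral R (ψ0 b) := by
    intro b
    obtain ⟨q, hq, hqb⟩ := Algebra.IsIntegral.isIntegral (R := S) b
    refine ⟨q.map f, hq.map _, ?_⟩
    rw [Polynomial.eval₂_map, ← hψ0, ← Polynomial.hom_eval₂, hqb, map_zero]
  let L : IntermediateField F Ω := IntermediateField.adjoin F (ψ0 '' T)
  have : FiniteDimensional F L := by
    apply IntermediateField.finiteDimensional_adjoin
    rintro _ ⟨b, -, rfl⟩
    exact (hint b).tower_top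
  have hL : ∀ b, ψ0 b ∈ L := by
    intro b
    have : b ∈ Submodule.span S (T : Set B) := by rw [hT]; trivial
    induction this using Submodule.span_induction with
    | mem x hx => exact IntermediateField.subset_adjoin _ _ ⟨x, hx, rfl⟩
    | zero => rw [map_zero]; exact L.zero_mem
    | add x y _ _ hx hy => rw [map_add]; exact L.add_mem hx hy
    | smul a x _ hx =>
      rw [Algebra.smul_def, map_mul]
      refine L.mul_mem ?_ hx
      have : ψ0 (algebraMap S B a) = algebraMap F Ω (algebraMap R F (f a)) := by
        rw [← IsScalarTower.algebraMap_apply]; exact RingHom.congr_fun hψ0 a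
      rw [this]; exact L.algebraMap_mem _
  let ψL : B →+* L := ψ0.codRestrict L hL
  have : IsScalarTower R L Ω := IsScalarTower.of_algebraMap_eq (fun _ => rfl)
  have hintL : ∀ b, ψL b ∈ integralClosure R L := by
    intro b
    refine (isIntegral_algHom_iff (IsScalarTower.toAlgHom R L Ω) (algebraMap L Ω).injective).1 ?_
    exact hint b
  let C := integralClosure R L
  let ψC : B →+* C := ψL.codRestrict C hintL
  have : IsDedekindDomain C := integralClosure.isDedekindDomain R F L
  have hRL : Function.Injective (algebraMap R L) := by
    rw [IsScalarTower.algebraMap_eq R F L]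
    exact (algebraMap F L).injective.comp (IsFractionRing.injective R F)
  have hRC : Function.Injective (algebraMap R C) := by
    intro x y hxy
    exact hRL (congrArg (algebraMap C L) hxy)
  obtain ⟨h, e, u, he, hu, hC, hX⟩ := exists_dedekind_hom (K := K) (C := C) hRC
  refine ⟨h.comp ψC, h.comp (algebraMap R C), e, u, he, hu, ?_, hC, hX⟩
  have : ψC.comp (algebraMap S B) = (algebraMap R C).comp f := by
    ext s
    exact RingHom.congr_fun hψ0 s
  rw [RingHom.comp_assoc, this, RingHom.comp_assoc]

/-- The algebra `⊕ m^⌈q l⌉ W^l`. -/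
def ceilAlg {R : Type*} [CommRing R] (m : Ideal R) (q : NNReal) :
    Subalgebra R (Polynomial R) where
  carrier := {p | ∀ l : ℕ, p.coeff l ∈ m ^ ⌈q * l⌉₊}
  mul_mem' := by
    intro a b ha hb l
    rw [Polynomial.coeff_mul]
    refine Ideal.sum_mem _ fun x hx => ?_
    have h1 : a.coeff x.1 * b.coeff x.2 ∈ m ^ (⌈q * (x.1 : ℕ)⌉₊ + ⌈q * (x.2 : ℕ)⌉₊) := by
      rw [pow_add]; exact Ideal.mul_mem_mul (ha _) (hb _)
    refine Ideal.pow_le_pow_right ?_ h1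
    rw [← Finset.HasAntidiagonal.mem_antidiagonal.1 hx]
    push_cast
    rw [mul_add]
    exact Nat.ceil_add_le _ _
  add_mem' := by
    intro a b ha hb l
    rw [Polynomial.coeff_add]
    exact Ideal.add_mem _ (ha l) (hb l)
  algebraMap_mem' := by
    intro r l
    rw [Polynomial.algebraMap_apply, Algebra.algebraMap_self_apply, Polynomial.coeff_C]
    split_ifs with h
    · subst h; simp
    · exact Ideal.zero_mem _

theorem monomial_mem_ceilAlg {R : Type*} [CommRing R] (m : Ideal R) (q : NNReal) (f : R) (l : ℕ) :
    (C f * X ^ l : Polynomial R) ∈ ceilAlg m q ↔ f ∈ m ^ ⌈q * l⌉₊ := by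
  constructor
  · intro h
    simpa using h l
  · intro h n
    rw [Polynomial.coeff_C_mul_X_pow]
    split_ifs with hn
    · subst hn; exact h
    · exact Ideal.zero_mem _

theorem derivation_pow {k R : Type*} [CommRing k] [CommRing R] [Algebra k R] (m : Ideal R)
    (D : Derivation k R R) (n : ℕ) : ∀ f ∈ m ^ (n + 1), D f ∈ m ^ n := by
  induction n with
  | zero => intro f _; simp
  | succ n ih =>
    intro f hf
    rw [pow_succ] at hf
    refine Submodule.mul_induction_on hf ?_ ?_
    · intro a ha b hb
      rw [Derivation.leibniz, smul_eq_mul, smul_eq_mul]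
      refine Ideal.add_mem _ (Ideal.mul_mem_right _ _ ha) ?_
      rw [pow_succ']
      exact Ideal.mul_mem_mul hb (ih a ha)
    · intro a b ha hb
      rw [map_add]; exact Ideal.add_mem _ ha hb

theorem ceil_step {q : NNReal} (hq : 1 ≤ q) (l : ℕ) :
    ⌈q * l⌉₊ + 1 ≤ ⌈q * ((l + 1 : ℕ) : NNReal)⌉₊ := by
  rw [← Nat.ceil_add_one (by positivity)]
  apply Nat.ceil_mono
  push_cast
  rw [mul_add, mul_one]
  gcongr

theorem diffClosure_le_ceilAlg {k R ι : Type*} [CommRing k] [CommRing R] [Algebra k R]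
    (D : ι → Derivation k R R) (M : Set (Polynomial R)) (m : Ideal R) {q : NNReal} (hq : 1 ≤ q)
    (hM : M ⊆ ceilAlg m q) : diffClosure D M ≤ ceilAlg m q := by
  refine sInf_le ⟨hM, ?_, ?_, ?_⟩
  · intro p hp n
    rw [monomial_mem_ceilAlg]; exact hp n
  · intro f l _ h
    rw [monomial_mem_ceilAlg] at h ⊢
    exact Ideal.pow_le_pow_right (by have := ceil_step hq l; omega) h
  · intro f l j h
    rw [monomial_mem_ceilAlg] at h ⊢
    exact derivation_pow m (D j) _ f (Ideal.pow_le_pow_right (ceil_step hq l) h)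

/-- If the algebra lies in `ceilAlg m q` then its order is at least `q`. -/
theorem le_reesOrder {R : Type*} [CommRing R] {m : Ideal R} {G : Subalgebra R (Polynomial R)}
    {q : NNReal} (hb : ∀ f : R, f ≠ 0 → BddAbove {n : ℕ | f ∈ m ^ n}) (hG : G ≤ ceilAlg m q) :
    (q : ℝ≥0∞) ≤ reesOrder m G := by
  refine le_sInf ?_
  rintro _ ⟨f, n, hf, hn, hfn, rfl⟩
  have h1 := (monomial_mem_ceilAlg m q f n).1 (hG hfn)
  have h2 := le_adicOrder (hb f hf) h1
  have h3 : q * n ≤ (adicOrder m f : NNReal) := (Nat.le_ceil _).trans (by exact_mod_cast h2)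
  rw [ENNReal.le_div_iff_mul_le (by left; simp; omega) (by left; simp)]
  exact_mod_cast h3

theorem mS_pow_map {k : Type} [Field k] {d : ℕ}
    {S : Type} [CommRing S] [Algebra (MvPolynomial (Fin d) k) S]
    {K : Type} [Field K] (f : S →+* PowerSeries K) (N : ℕ)
    (hN : ∀ j, f (zvar k d S j) ∈ tId K ^ N) (n : ℕ) (s : S) (hs : s ∈ mS k d S ^ n) :
    f s ∈ tId K ^ (N * n) := by
  have hm : mS k d S ≤ (tId K ^ N).comap f := by
    rw [mS, mPoly_eq, MvPolynomial.idealOfVars, Ideal.map_span, Ideal.span_le]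
    rintro _ ⟨_, ⟨j, rfl⟩, rfl⟩
    exact hN j
  rw [pow_mul]
  exact Ideal.le_comap_pow f n (Ideal.pow_right_mono hm n hs)

theorem root_order {K : Type} [Field K] (b : ℕ) (hb : 2 ≤ b) (β : ℕ → PowerSeries K)
    (q : NNReal) (N : ℕ) (hβ : ∀ j ≤ b - 2, β j ∈ tId K ^ (N * ⌈q * ((b - j : ℕ) : NNReal)⌉₊))
    (θ : PowerSeries K) (hθ : θ ^ b + ∑ j ∈ Finset.range (b - 1), β j * θ ^ j = 0) :
    θ ∈ tId K ^ ⌈q * N⌉₊ := by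
  by_cases h0 : θ = 0
  · rw [h0]; exact Ideal.zero_mem _
  by_contra hcon
  set o := tOrd θ with ho
  have hoN : (o : NNReal) < q * N := by
    by_contra h
    push Not at h
    exact hcon (Ideal.pow_le_pow_right (Nat.ceil_le.2 h) (mem_pow_adicOrder (tId K) θ))
  have hmem : θ ∈ tId K ^ o := mem_pow_adicOrder (tId K) θ
  have h1 : θ ^ b ∈ tId K ^ (o * b + 1) := by
    rw [eq_neg_of_add_eq_zero_left hθ]
    refine Ideal.neg_mem_iff _ |>.2 (Ideal.sum_mem _ fun j hj => ?_)
    rw [Finset.mem_range] at hj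
    have h2 : β j * θ ^ j ∈ tId K ^ (N * ⌈q * ((b - j : ℕ) : NNReal)⌉₊ + o * j) := by
      rw [pow_add, pow_mul _ o j]
      exact Ideal.mul_mem_mul (hβ j (by omega)) (Ideal.pow_mem_pow hmem j)
    refine Ideal.pow_le_pow_right ?_ h2
    have h3 : o * (b - j) < N * ⌈q * ((b - j : ℕ) : NNReal)⌉₊ := by
      have h4 : (0 : NNReal) < ((b - j : ℕ) : NNReal) := by
        exact_mod_cast (by omega : 0 < b - j)
      have : ((o * (b - j) : ℕ) : NNReal) < ((N * ⌈q * ((b - j : ℕ) : NNReal)⌉₊ : ℕ) : NNReal) := by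
        rw [Nat.cast_mul, Nat.cast_mul]
        calc (o : NNReal) * ((b - j : ℕ) : NNReal) < q * N * ((b - j : ℕ) : NNReal) := by gcongr
          _ = N * (q * ((b - j : ℕ) : NNReal)) := by ring
          _ ≤ _ := by gcongr; exact Nat.le_ceil _
      exact_mod_cast this
    have h5 : o * b = o * (b - j) + o * j := by rw [← mul_add]; congr 1; omega
    omega
  obtain ⟨v, hv⟩ := (mem_tId_pow _ _).1 hmem
  rw [hv, mul_pow, ← pow_mul, mem_tId_pow, pow_succ] at h1
  have h6 := (mul_dvd_mul_iff_left (pow_ne_zero _ PowerSeries.X_ne_zero)).1 h1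
  have h7 := PowerSeries.X_prime.dvd_of_dvd_pow h6
  obtain ⟨w, rfl⟩ := h7
  have := le_tOrd h0 (n := o + 1) ((mem_tId_pow _ _).2 ⟨w, by rw [hv]; ring⟩)
  omega

theorem contactAlg_le {k : Type} [Field k] {d : ℕ}
    {S : Type} [CommRing S] [IsDomain S] [Algebra (MvPolynomial (Fin d) k) S]
    [Algebra k S] (D : Fin d → Derivation k S S) (P : Presentation k d S)
    {q : NNReal} (hle : elimAlg P D ≤ ceilAlg (mS k d S) q)
    (hgen : ∀ i, ∀ j ≤ P.b i - 2, P.Bc i j ∈ mS k d S ^ ⌈q * ((P.b i - j : ℕ) : NNReal)⌉₊)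
    {K : Type} [Field K] [Algebra k K]
    (φ : BRing P →ₐ[k] PowerSeries K) (N : ℕ)
    (hN : ∀ j, φ (algebraMap S (BRing P) (zvar k d S j)) ∈ tId K ^ N) :
    (∀ i, φ (theta P i) ∈ tId K ^ ⌈q * N⌉₊) ∧ contactAlg P D φ ≤ ceilAlg (tId K) (q * N) := by
  have hmap := mS_pow_map (k := k) (d := d) (φ.toRingHom.comp (algebraMap S (BRing P))) N hN
  have hθ : ∀ i, φ (theta P i) ∈ tId K ^ ⌈q * N⌉₊ := by
    intro i
    refine root_order (P.b i) (P.hb i) (fun j => φ (algebraMap S (BRing P) (P.Bc i j))) q N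
      (fun j hj => hmap _ _ (hgen i j hj)) _ ?_
    have h := congrArg φ (P.hroot i)
    rw [minPolyOf] at h
    simpa [theta] using h
  refine ⟨hθ, Algebra.adjoin_le ?_⟩
  rintro _ (⟨i, rfl⟩ | ⟨g, l, hg, -, rfl⟩)
  · have := (monomial_mem_ceilAlg (tId K) (q * N) (φ (theta P i)) 1).2 (by simpa using hθ i)
    simpa using this
  · refine (monomial_mem_ceilAlg _ _ _ _).2 ?_
    have h1 := hmap _ _ ((monomial_mem_ceilAlg _ _ _ _).1 (hle hg))
    refine Ideal.pow_le_pow_right (Nat.ceil_le.2 ?_) h1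
    push_cast
    calc q * N * l = N * (q * l) := by ring
      _ ≤ _ := by gcongr; exact Nat.le_ceil _

theorem Bc_zero_ne {k : Type} [Field k] {d : ℕ}
    {S : Type} [CommRing S] [IsDomain S] [Algebra (MvPolynomial (Fin d) k) S]
    [Algebra k S] (P : Presentation k d S) (i : Fin P.e) : P.Bc i 0 ≠ 0 := by
  intro h0
  have hb := P.hb i
  have hirr := P.hirr i
  set F := (minPolyOf (P.b i) (P.Bc i)).map (algebraMap S (FractionRing S)) with hF
  have hdvd : Polynomial.X ∣ F := by
    rw [Polynomial.X_dvd_iff, hF, Polynomial.coeff_map, minPolyOf, Polynomial.coeff_add,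
      Polynomial.finsetSum_coeff]
    have : (X ^ P.b i : Polynomial S).coeff 0 = 0 := by
      rw [Polynomial.coeff_X_pow, if_neg (by omega)]
    rw [this, zero_add, Finset.sum_eq_zero, map_zero]
    intro j _
    rw [Polynomial.coeff_C_mul_X_pow]
    split_ifs with hj
    · rw [← hj, h0]
    · rfl
  have hassoc := (Polynomial.irreducible_X.associated_of_dvd hirr hdvd)
  have hdeg := Polynomial.degree_eq_degree_of_associated hassoc
  have hc : F.coeff (P.b i) = 1 := by
    rw [hF, Polynomial.coeff_map, minPolyOf, Polynomial.coeff_add, Polynomial.finsetSum_coeff,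
      Polynomial.coeff_X_pow, if_pos rfl, Finset.sum_eq_zero, add_zero, map_one]
    intro j hj
    rw [Polynomial.coeff_C_mul_X_pow, if_neg]
    have := Finset.mem_range.1 hj
    omega
  have h2 := Polynomial.le_degree_of_ne_zero (n := P.b i) (p := F) (by rw [hc]; exact one_ne_zero)
  rw [← hdeg, Polynomial.degree_X] at h2
  have : P.b i ≤ 1 := by exact_mod_cast h2
  omega

/-- **Main Theorem** (Theorem `thm:main_order-r` / `thm:main`).
Let `X = Spec B` be given by a local presentation attached to the multiplicity, with
elimination algebra `G_X^{(d)}` over `S` and closed point `ξ`.  Then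
`ord_ξ(G_X^{(d)})` equals the minimum, over all field extensions `K ⊇ k` and all arcs
`φ : B → K⟦t⟧` in `X` through `ξ`, of `r_{X,φ} / ord(φ)`.  In particular
`r_{X,φ}/ord(φ) ≥ ord(G_X^{(d)})` for every such arc, and some arc attains the value,
so the infimum is a minimum. -/
theorem main_theorem_order_eq_min_normalized_contact_order
    (k : Type) [Field k] [CharZero k] (d : ℕ) (hd : 1 ≤ d)
    (S : Type) [CommRing S] [IsDomain S] [Algebra (MvPolynomial (Fin d) k) S]
    [Algebra k S] [IsScalarTower k (MvPolynomial (Fin d) k) S] [IsSLoc k d S]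
    (D : Fin d → Derivation k S S)
    (hD : ∀ i j : Fin d, D j (zvar k d S i) = if i = j then 1 else 0)
    (P : Presentation k d S) :
    IsLeast
      {q : ℝ≥0∞ | ∃ (K : Type) (_ : Field K) (_ : Algebra k K)
        (φ : BRing P →ₐ[k] PowerSeries K), IsArc P φ ∧
        q = rOrd P D φ / (arcOrd P φ : ℝ≥0∞)}
      (reesOrder (mS k d S) (elimAlg P D)) := by
  classical
  have hbdd : ∀ s : S, s ≠ 0 → BddAbove {n : ℕ | s ∈ mS k d S ^ n} :=
    fun s hs => bddAbove_mS k d S hs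
  -- choose the generator of minimal order
  obtain ⟨i0, j0, hj0, hB0, q, hq0, hqmin⟩ : ∃ i0, ∃ j0 ≤ P.b i0 - 2, P.Bc i0 j0 ≠ 0 ∧
      ∃ q : NNReal, q = (adicOrder (mS k d S) (P.Bc i0 j0) : NNReal) / ((P.b i0 - j0 : ℕ) : NNReal) ∧
        ∀ i, ∀ j ≤ P.b i - 2, P.Bc i j ≠ 0 →
          q ≤ (adicOrder (mS k d S) (P.Bc i j) : NNReal) / ((P.b i - j : ℕ) : NNReal) := by
    let T : Finset ((i : Fin P.e) × ℕ) :=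
      (Finset.univ.sigma fun i => Finset.range (P.b i - 1)).filter fun x => P.Bc x.1 x.2 ≠ 0
    have hT : ∀ i j, (⟨i, j⟩ : (i : Fin P.e) × ℕ) ∈ T ↔ j ≤ P.b i - 2 ∧ P.Bc i j ≠ 0 := by
      intro i j
      have := P.hb i
      simp only [T, Finset.mem_filter, Finset.mem_sigma, Finset.mem_univ, true_and,
        Finset.mem_range, and_congr_left_iff]
      intro _; omega
    obtain ⟨i, j, hj, hB⟩ := P.hnz
    obtain ⟨⟨i0, j0⟩, h0, hmin⟩ := Finset.exists_min_image T
      (fun x => (adicOrder (mS k d S) (P.Bc x.1 x.2) : NNReal) / ((P.b x.1 - x.2 : ℕ) : NNReal))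
      ⟨⟨i, j⟩, (hT i j).2 ⟨hj, hB⟩⟩
    obtain ⟨h1, h2⟩ := (hT i0 j0).1 h0
    exact ⟨i0, j0, h1, h2, _, rfl, fun i j hj hB => hmin ⟨i, j⟩ ((hT i j).2 ⟨hj, hB⟩)⟩
  have hpos : ∀ i, ∀ j ≤ P.b i - 2, (0 : NNReal) < ((P.b i - j : ℕ) : NNReal) := by
    intro i j hj
    have := P.hb i
    exact_mod_cast (by omega : 0 < P.b i - j)
  have hq1 : 1 ≤ q := by
    rw [hq0, le_div_iff₀ (hpos _ _ hj0), one_mul]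
    exact_mod_cast le_adicOrder (hbdd _ hB0) (P.hmem i0 j0 hj0)
  have hgen : ∀ i, ∀ j ≤ P.b i - 2,
      P.Bc i j ∈ mS k d S ^ ⌈q * ((P.b i - j : ℕ) : NNReal)⌉₊ := by
    intro i j hj
    by_cases hB : P.Bc i j = 0
    · rw [hB]; exact Ideal.zero_mem _
    · refine Ideal.pow_le_pow_right (Nat.ceil_le.2 ?_) (mem_pow_adicOrder _ _)
      rw [← le_div_iff₀ (hpos _ _ hj)]
      exact hqmin i j hj hB
  have hle : elimAlg P D ≤ ceilAlg (mS k d S) q := by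
    refine diffClosure_le_ceilAlg D _ _ hq1 ?_
    rintro _ ⟨i, j, hj, rfl⟩
    exact (monomial_mem_ceilAlg _ _ _ _).2 (hgen i j hj)
  have hmemE : ∀ i, ∀ j ≤ P.b i - 2,
      (Polynomial.C (P.Bc i j) * Polynomial.X ^ (P.b i - j) : Polynomial S) ∈ elimAlg P D := by
    intro i j hj
    refine Algebra.mem_sInf.2 ?_
    rintro G ⟨hG, -⟩
    exact hG ⟨i, j, hj, rfl⟩
  have hnat : ∀ i, ∀ j ≤ P.b i - 2, 1 ≤ P.b i - j := by
    intro i j hj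
    have := P.hb i
    omega
  have hord : reesOrder (mS k d S) (elimAlg P D) = q := by
    refine le_antisymm ?_ (le_reesOrder hbdd hle)
    refine sInf_le ⟨P.Bc i0 j0, P.b i0 - j0, hB0, hnat _ _ hj0, hmemE _ _ hj0, ?_⟩
    rw [hq0, ENNReal.coe_div (hpos _ _ hj0).ne']
    simp
  rw [hord]
  -- the lower bound with an arbitrary integer `N`
  have hlow : ∀ (K : Type) (_ : Field K) (_ : Algebra k K)
      (φ : BRing P →ₐ[k] PowerSeries K) (N : ℕ), 
      (∀ j, φ (algebraMap S (BRing P) (zvar k d S j)) ∈ tId K ^ N) →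
      (q : ℝ≥0∞) * N ≤ rOrd P D φ := by
    intro K _ _ φ N hN
    have h1 := (contactAlg_le D P hle hgen φ N hN).2
    have h2 := le_reesOrder (q := q * N) (m := tId K)
      (fun f hf => ⟨_, fun _ hn => bddAbove_tId hf _ hn⟩) h1
    rw [rOrd]
    refine le_trans (le_of_eq ?_) h2
    push_cast
    rfl
  constructor
  · -- construction of the arc
    let K := AlgebraicClosure k
    have : CharZero K := charZero_of_injective_algebraMap (algebraMap k K).injective
    have := P.hfinite
    obtain ⟨f, hfc, hfz, hfT⟩ := exists_base_arc k d S K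
      (insert (P.Bc i0 j0) (Finset.univ.image fun i => P.Bc i 0)) (by
        intro s hs
        rcases Finset.mem_insert.1 hs with rfl | hs
        · exact hB0
        · obtain ⟨i, -, rfl⟩ := Finset.mem_image.1 hs
          exact Bc_zero_ne P i)
    obtain ⟨ψ, g, e, u, he, hu, hψ, hgC, hgX⟩ := exists_arc_extension (K := K) (S := S)
      (B := BRing P) P.hinj f
    have hψ' : ∀ s, ψ (algebraMap S (BRing P) s) = g (f s) := fun s => RingHom.congr_fun hψ s
    let φ : BRing P →ₐ[k] PowerSeries K :=
      { ψ with
        commutes' := by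
          intro c
          show ψ (algebraMap k (BRing P) c) = _
          rw [IsScalarTower.algebraMap_apply k S (BRing P), hψ', hfc, hgC,
            PowerSeries.algebraMap_apply] }
    have hφ : ∀ s, φ (algebraMap S (BRing P) s) = g (f s) := hψ'
    have hz : ∀ j, ∃ v, IsUnit v ∧
        φ (algebraMap S (BRing P) (zvar k d S j)) = PowerSeries.X ^ e * v := by
      intro j
      obtain ⟨a, ha, h⟩ := hfz j
      refine ⟨PowerSeries.C a * u, ((isUnit_iff_ne_zero.2 ha).map PowerSeries.C).mul hu, ?_⟩
      rw [hφ, h, map_mul, hgC, hgX]; ring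
    have hgood : ∀ s (n : ℕ) (v : PowerSeries K), IsUnit v → f s = PowerSeries.X ^ n * v →
        ∃ w, IsUnit w ∧ φ (algebraMap S (BRing P) s) = PowerSeries.X ^ (e * n) * w := by
      intro s n v hv h
      refine ⟨u ^ n * g v, (hu.pow n).mul (hv.map g), ?_⟩
      rw [hφ, h, map_mul, map_pow, hgX, mul_pow, pow_mul]; ring
    have hne : ∀ (n : ℕ) (w : PowerSeries K), IsUnit w → PowerSeries.X ^ n * w ≠ 0 :=
      fun n w hw => mul_ne_zero (pow_ne_zero _ PowerSeries.X_ne_zero) hw.ne_zero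
    have hze : ∀ j, φ (algebraMap S (BRing P) (zvar k d S j)) ∈ tId K ^ e := by
      intro j
      obtain ⟨v, -, h⟩ := hz j
      rw [h, mem_tId_pow]; exact dvd_mul_right _ _
    have hθe : ∀ i, φ (theta P i) ∈ tId K ^ e := by
      intro i
      refine Ideal.pow_le_pow_right ?_ ((contactAlg_le D P hle hgen φ e hze).1 i)
      have : (e : NNReal) ≤ ⌈q * (e : NNReal)⌉₊ :=
        (le_mul_of_one_le_left (by positivity) hq1).trans (Nat.le_ceil _)
      exact_mod_cast this
    have hθ0 : ∀ i, φ (theta P i) ≠ 0 := by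
      intro i h0
      obtain ⟨n, v, hv, -, hfs⟩ := hfT (P.Bc i 0)
        (Finset.mem_insert_of_mem (Finset.mem_image_of_mem _ (Finset.mem_univ i)))
      obtain ⟨w, hw, hB⟩ := hgood _ n v hv hfs
      have hb := P.hb i
      have h := congrArg φ (P.hroot i)
      rw [minPolyOf] at h
      have h0' : φ (Ideal.Quotient.mk P.I (MvPolynomial.X i)) = 0 := h0
      simp only [map_add, map_sum, map_mul, map_pow, Polynomial.aeval_X, Polynomial.aeval_C,
        h0', map_zero] at h
      rw [zero_pow (by omega), zero_add, Finset.sum_eq_single 0] at h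
      · rw [pow_zero, mul_one, hB] at h
        exact hne _ _ hw h
      · intro j _ hj
        rw [zero_pow hj, mul_zero]
      · intro hj
        exact absurd (Finset.mem_range.2 (by omega)) hj
    have hle1 : tId K ^ e ≤ tId K := Ideal.pow_le_self (by omega)
    have harc : IsArc P φ := by
      refine ⟨?_, fun i => hle1 (hθe i), hθ0, ?_⟩
      · intro s hs
        have := mS_pow_map (k := k) (d := d) (φ.toRingHom.comp (algebraMap S (BRing P))) e hze 1 s
          (by rwa [pow_one])
        rw [mul_one] at this
        exact hle1 this
      · intro j
        obtain ⟨v, hv, h⟩ := hz j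
        rw [h]; exact hne _ _ hv
    have htz : ∀ j, tOrd (φ (algebraMap S (BRing P) (zvar k d S j))) = e := by
      intro j
      obtain ⟨v, hv, h⟩ := hz j
      rw [h, tOrd_eq hv]
    have harcOrd : arcOrd P φ = e := by
      refine le_antisymm (Nat.sInf_le (Or.inr ⟨⟨0, hd⟩, htz _⟩)) ?_
      refine le_csInf ⟨_, Or.inr ⟨⟨0, hd⟩, htz _⟩⟩ ?_
      rintro _ (⟨i, rfl⟩ | ⟨j, rfl⟩)
      · exact le_tOrd (hθ0 i) (hθe i)
      · exact (htz j).ge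
    refine ⟨K, inferInstance, inferInstance, φ, harc, ?_⟩
    have he0 : (e : ℝ≥0∞) ≠ 0 := by
      have : e ≠ 0 := by omega
      exact_mod_cast this
    have hr : rOrd P D φ = q * e := by
      refine le_antisymm ?_ (hlow K _ _ φ e hze)
      obtain ⟨n, v, hv, hmn, hfs⟩ := hfT (P.Bc i0 j0) (Finset.mem_insert_self _ _)
      obtain ⟨w, hw, hB⟩ := hgood _ n v hv hfs
      have hnn : n ≤ adicOrder (mS k d S) (P.Bc i0 j0) := le_adicOrder (hbdd _ hB0) hmn
      have hB' : φ (algebraMap S (BRing P) (P.Bc i0 j0)) ≠ 0 := by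
        rw [hB]; exact hne _ _ hw
      have h1 : rOrd P D φ ≤ (tOrd (φ (algebraMap S (BRing P) (P.Bc i0 j0))) : ℝ≥0∞) /
          ((P.b i0 - j0 : ℕ) : ℝ≥0∞) := by
        refine sInf_le ⟨_, P.b i0 - j0, hB', hnat _ _ hj0, ?_, rfl⟩
        exact Algebra.subset_adjoin (Or.inr ⟨_, _, hmemE _ _ hj0, hB', rfl⟩)
      refine h1.trans ?_
      rw [hB, tOrd_eq hw]
      have h2 : ((e * n : ℕ) : NNReal) / ((P.b i0 - j0 : ℕ) : NNReal) ≤ q * e := by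
        rw [hq0, div_mul_eq_mul_div]
        gcongr
        rw [mul_comm]
        exact_mod_cast Nat.mul_le_mul_right e hnn
      have h3 := ENNReal.coe_le_coe.2 h2
      rw [ENNReal.coe_div (hpos _ _ hj0).ne'] at h3
      simpa using h3
    rw [hr, harcOrd, ENNReal.mul_div_cancel_right he0 (by simp)]
  · rintro _ ⟨K, _, _, φ, ⟨h1, h2, h3, h4⟩, rfl⟩
    have hmem : arcOrd P φ ∈ ((Set.range fun i => tOrd (φ (theta P i))) ∪
        (Set.range fun j => tOrd (φ (algebraMap S (BRing P) (zvar k d S j))))) :=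
      Nat.sInf_mem ⟨_, Or.inr ⟨⟨0, hd⟩, rfl⟩⟩
    have hposN : 1 ≤ arcOrd P φ := by
      rcases hmem with ⟨i, hi⟩ | ⟨j, hj⟩
      · rw [← hi]; exact le_tOrd (h3 i) (by rw [pow_one]; exact h2 i)
      · rw [← hj]
        refine le_tOrd (h4 j) ?_
        rw [pow_one]
        refine h1 _ ?_
        refine Ideal.mem_map_of_mem _ ?_
        rw [mPoly_eq]
        exact Ideal.subset_span ⟨j, rfl⟩
    have hN : ∀ j, φ (algebraMap S (BRing P) (zvar k d S j)) ∈ tId K ^ (arcOrd P φ) := by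
      intro j
      exact Ideal.pow_le_pow_right (Nat.sInf_le (Or.inr ⟨j, rfl⟩)) (mem_pow_adicOrder (tId K) _)
    rw [ENNReal.le_div_iff_mul_le (by left; simp; omega) (by left; simp)]
    exact hlow K _ _ φ _ hN

end NashMult
end
end

section
/- Let X = Spec(B) be given by a local presentation attached to the multiplicity as in the context, with elimination algebra G_X^{(d)} over S and closed point ξ. Then for every field extension K of k and every arc φ : B → K[[t]] in X through ξ (with all φ(θ_i) and φ(z_j) nonzero), one has r_{X,φ}/ord(φ) ≥ ord(G_X^{(d)}). -/
open Polynomial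
open scoped ENNReal

noncomputable section

namespace NashMult

variable (k : Type) [Field k] (d : ℕ)
variable (S : Type) [CommRing S] [Algebra (MvPolynomial (Fin d) k) S] [Algebra k S]

variable [IsDomain S]
variable {k d S}

theorem aux_mem_adicOrder {R : Type*} [CommRing R] (m : Ideal R) (f : R) :
    f ∈ m ^ adicOrder m f := by
  by_cases h : BddAbove {n : ℕ | f ∈ m ^ n}
  · exact Nat.sSup_mem (s := {n : ℕ | f ∈ m ^ n}) ⟨0, by simp⟩ h
  · have : adicOrder m f = 0 := Nat.sSup_of_not_bddAbove h
    rw [this]; simp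

theorem aux_mem_tId_pow {F : Type*} [Field F] (f : PowerSeries F) (n : ℕ) :
    f ∈ tId F ^ n ↔ (n : ℕ∞) ≤ f.order := by
  rw [tId, Ideal.span_singleton_pow, Ideal.mem_span_singleton]
  rw [PowerSeries.order_eq_emultiplicity_X, pow_dvd_iff_le_emultiplicity]

theorem aux_tOrd {F : Type*} [Field F] (f : PowerSeries F) (hf : f ≠ 0) :
    (tOrd f : ℕ∞) = f.order := by
  rw [← PowerSeries.coe_toNat_order hf]
  congr 1
  have h : {n : ℕ | f ∈ tId F ^ n} = Set.Iic f.order.toNat := by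
    ext n
    simp only [Set.mem_setOf_eq, Set.mem_Iic, aux_mem_tId_pow]
    rw [← PowerSeries.coe_toNat_order hf]
    simp
  unfold tOrd adicOrder
  rw [h]
  exact csSup_Iic

theorem aux_mPoly_le (k₀ : Type) [Field k₀] (d₀ : ℕ) :
    mPoly k₀ d₀ ≤ MvPolynomial.idealOfVars (Fin d₀) k₀ := by
  intro p hp
  rw [← pow_one (MvPolynomial.idealOfVars (Fin d₀) k₀), MvPolynomial.mem_pow_idealOfVars_iff']
  intro x hx
  have hx0 : x = 0 := by
    have : Finsupp.degree x = 0 := by omega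
    exact (Finsupp.degree_eq_zero_iff x).mp this
  subst hx0
  have h : MvPolynomial.aeval (fun _ => (0 : k₀)) p = 0 := hp
  have h2 := MvPolynomial.aeval_zero' (R := k₀) (S₁ := k₀) p
  rw [h2] at h
  simpa [MvPolynomial.constantCoeff_eq] using h

theorem aux_coeff {F : Type*} [Field F] (c : ℝ≥0∞) (M : Set (Polynomial (PowerSeries F)))
    (hM : ∀ p ∈ M, ∀ n : ℕ, c * n ≤ ((p.coeff n).order : ℝ≥0∞))
    (p : Polynomial (PowerSeries F)) (hp : p ∈ Algebra.adjoin (PowerSeries F) M) :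
    ∀ n : ℕ, c * n ≤ ((p.coeff n).order : ℝ≥0∞) := by
  have hadd : ∀ (a : ℝ≥0∞) (f g : PowerSeries F), a ≤ (f.order : ℝ≥0∞) → a ≤ (g.order : ℝ≥0∞) →
      a ≤ ((f + g).order : ℝ≥0∞) := by
    intro a f g hf hg
    refine le_trans (le_min hf hg) ?_
    rw [← ENat.toENNReal_min]
    exact ENat.toENNReal_mono (PowerSeries.min_order_le_order_add f g)
  induction hp using Algebra.adjoin_induction with
  | mem x hx => exact hM x hx
  | algebraMap r =>
    intro n
    rw [Polynomial.algebraMap_eq, Polynomial.coeff_C]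
    split_ifs with h
    · simp [h]
    · simp
  | add x y _ _ hx hy =>
    intro n
    rw [Polynomial.coeff_add]
    exact hadd _ _ _ (hx n) (hy n)
  | mul x y _ _ hx hy =>
    intro n
    rw [Polynomial.coeff_mul]
    refine Finset.sum_induction _ (fun f : PowerSeries F => c * n ≤ (f.order : ℝ≥0∞))
      (hadd _) (by simp) ?_
    rintro ⟨i, j⟩ hij
    have hij' : i + j = n := by simpa using hij
    rw [← hij', PowerSeries.order_mul, ENat.toENNReal_add]
    push_cast
    rw [mul_add]
    exact add_le_add (hx i) (hy j)

theorem aux_root {F : Type*} [Field F] (c : ℝ≥0∞) (b : ℕ) (B : ℕ → PowerSeries F)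
    (θ : PowerSeries F) (hθ : θ ≠ 0)
    (h0 : θ ^ b + ∑ j ∈ Finset.range (b - 1), B j * θ ^ j = 0)
    (hB : ∀ j ∈ Finset.range (b - 1), c * ((b - j : ℕ) : ℝ≥0∞) ≤ ((B j).order : ℝ≥0∞)) :
    c ≤ (θ.order : ℝ≥0∞) := by
  obtain ⟨a, ha⟩ : ∃ a : ℕ, θ.order = a := ⟨_, (PowerSeries.coe_toNat_order hθ).symm⟩
  have hb : (θ ^ b).order = ((b * a : ℕ) : ℕ∞) := by
    rw [PowerSeries.order_pow, ha]; simp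
  have hex : ∃ j ∈ Finset.range (b - 1), (B j * θ ^ j).order ≤ ((b * a : ℕ) : ℕ∞) := by
    by_contra! hcon
    have hs : ((b * a : ℕ) : ℕ∞) < (∑ j ∈ Finset.range (b - 1), B j * θ ^ j).order := by
      refine Finset.sum_induction _
        (fun f : PowerSeries F => ((b * a : ℕ) : ℕ∞) < f.order) ?_ ?_ hcon
      · intro f g hf hg
        exact lt_of_lt_of_le (lt_min hf hg) (PowerSeries.min_order_le_order_add f g)
      · rw [PowerSeries.order_zero]
        exact ENat.coe_lt_top _
    rw [eq_neg_of_add_eq_zero_right h0, PowerSeries.order_neg, hb] at hs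
    exact lt_irrefl _ hs
  obtain ⟨j, hj, hle⟩ := hex
  have hjb := Finset.mem_range.mp hj
  rw [PowerSeries.order_mul, PowerSeries.order_pow, ha] at hle
  have hBj : (B j).order ≠ ⊤ := by
    intro h
    rw [h, top_add] at hle
    exact (ENat.coe_ne_top _) (top_le_iff.mp hle)
  obtain ⟨v, hv⟩ := ENat.ne_top_iff_exists.mp hBj
  have h1 := hB j hj
  rw [← hv] at hle h1
  have hle' : v + j * a ≤ b * a := by
    rw [nsmul_eq_mul] at hle
    exact_mod_cast hle
  have h2 : v ≤ a * (b - j) := by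
    obtain ⟨e, rfl⟩ : ∃ e, b = j + e := ⟨b - j, by omega⟩
    rw [Nat.add_sub_cancel_left]
    nlinarith
  have h3 : c * ((b - j : ℕ) : ℝ≥0∞) ≤ (a : ℝ≥0∞) * ((b - j : ℕ) : ℝ≥0∞) := by
    refine h1.trans ?_
    rw [ENat.toENNReal_coe]
    exact_mod_cast h2
  rw [ha, ENat.toENNReal_coe]
  have hne : ((b - j : ℕ) : ℝ≥0∞) ≠ 0 := by
    rw [Nat.cast_ne_zero]; omega
  exact (ENNReal.mul_le_mul_iff_left hne (ENNReal.natCast_ne_top _)).mp h3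

/-- (Theorem `thm:desigualdad_gral`.)  For every field extension `K ⊇ k` and every arc
`φ : B → K⟦t⟧` in `X` through `ξ`, one has `r_{X,φ} / ord(φ) ≥ ord(G_X^{(d)})`. -/
theorem normalized_contact_order_ge_elimination_order
    (k : Type) [Field k] [CharZero k] (d : ℕ) (hd : 1 ≤ d)
    (S : Type) [CommRing S] [IsDomain S] [Algebra (MvPolynomial (Fin d) k) S]
    [Algebra k S] [IsScalarTower k (MvPolynomial (Fin d) k) S] [IsSLoc k d S]
    (D : Fin d → Derivation k S S)
    (hD : ∀ i j : Fin d, D j (zvar k d S i) = if i = j then 1 else 0)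
    (P : Presentation k d S)
    (K : Type) [Field K] [Algebra k K]
    (φ : BRing P →ₐ[k] PowerSeries K) (hφ : IsArc P φ) :
    reesOrder (mS k d S) (elimAlg P D) ≤ rOrd P D φ / (arcOrd P φ : ℝ≥0∞) := by
  obtain ⟨hm, hθt, hθ0, hz0⟩ := hφ
  set N := arcOrd P φ with hN
  set r := reesOrder (mS k d S) (elimAlg P D) with hr
  -- the order of the arc is positive
  have hpos : ∀ f : PowerSeries K, f ∈ tId K → f ≠ 0 → 1 ≤ tOrd f := by
    intro f hf hf0
    rw [← pow_one (tId K), aux_mem_tId_pow, ← aux_tOrd f hf0] at hf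
    exact_mod_cast hf
  have hzm : ∀ j, zvar k d S j ∈ mS k d S := by
    intro j
    refine Ideal.mem_map_of_mem _ ?_
    change MvPolynomial.aeval (fun _ => (0 : k)) (MvPolynomial.X j) = 0
    simp
  have hN1 : 1 ≤ N := by
    have hne : ((Set.range fun i => tOrd (φ (theta P i))) ∪
      (Set.range fun j => tOrd (φ (algebraMap S (BRing P) (zvar k d S j))))).Nonempty :=
      ⟨_, Or.inl ⟨⟨0, P.he⟩, rfl⟩⟩
    rcases Nat.sInf_mem hne with ⟨i, hi⟩ | ⟨j, hj⟩
    · rw [hN, arcOrd, ← hi]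
      exact hpos _ (hθt i) (hθ0 i)
    · rw [hN, arcOrd, ← hj]
      exact hpos _ (hm _ (hzm j)) (hz0 j)
  -- the arc restricted to S
  let ψ : S →+* PowerSeries K := (φ : BRing P →+* PowerSeries K).comp (algebraMap S (BRing P))
  have hψ : ∀ s, ψ s = φ (algebraMap S (BRing P) s) := fun s => rfl
  have hmap : (mS k d S).map ψ ≤ tId K ^ N := by
    rw [mS, Ideal.map_map, Ideal.map_le_iff_le_comap]
    refine (aux_mPoly_le k d).trans ?_
    rw [MvPolynomial.idealOfVars, Ideal.span_le]
    rintro _ ⟨j, rfl⟩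
    change φ (algebraMap S (BRing P) (zvar k d S j)) ∈ tId K ^ N
    rw [aux_mem_tId_pow, ← aux_tOrd _ (hz0 j)]
    have : N ≤ tOrd (φ (algebraMap S (BRing P) (zvar k d S j))) :=
      Nat.sInf_le (Or.inr ⟨j, rfl⟩)
    exact_mod_cast this
  have helim : ∀ (g : S) (l : ℕ), (Polynomial.C g * Polynomial.X ^ l : Polynomial S) ∈ elimAlg P D →
      (r * N) * l ≤ ((φ (algebraMap S (BRing P) g)).order : ℝ≥0∞) := by
    intro g l hg
    rw [← hψ]
    rcases Nat.eq_zero_or_pos l with hl | hl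
    · simp [hl]
    by_cases hg0 : g = 0
    · simp [hg0]
    have h1 : r ≤ (adicOrder (mS k d S) g : ℝ≥0∞) / (l : ℝ≥0∞) :=
      sInf_le ⟨g, l, hg0, hl, hg, rfl⟩
    have hl0 : (l : ℝ≥0∞) ≠ 0 := by
      rw [Nat.cast_ne_zero]; omega
    rw [ENNReal.le_div_iff_mul_le (Or.inl hl0) (Or.inl (ENNReal.natCast_ne_top _))] at h1
    have h2 : ψ g ∈ tId K ^ (N * adicOrder (mS k d S) g) := by
      rw [pow_mul]
      refine Ideal.pow_right_mono hmap _ ?_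
      rw [← Ideal.map_pow]
      exact Ideal.mem_map_of_mem _ (aux_mem_adicOrder _ _)
    rw [aux_mem_tId_pow, ← ENat.toENNReal_le, ENat.toENNReal_coe] at h2
    refine le_trans ?_ h2
    push_cast
    calc r * N * l = N * (r * l) := by ring
      _ ≤ _ := by gcongr
  have htheta : ∀ i, r * N ≤ ((φ (theta P i)).order : ℝ≥0∞) := by
    intro i
    refine aux_root (r * N) (P.b i) (fun j => ψ (P.Bc i j)) _ (hθ0 i) ?_ ?_
    · have h := congrArg φ (P.hroot i)
      rw [minPolyOf] at h
      simpa [theta, hψ] using h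
    · intro j hj
      have hjb := Finset.mem_range.mp hj
      refine helim _ _ ?_
      rw [elimAlg, diffClosure, Algebra.mem_sInf]
      rintro G ⟨hG, -⟩
      exact hG ⟨i, j, by omega, rfl⟩
  rw [ENNReal.le_div_iff_mul_le (Or.inl (by rw [Nat.cast_ne_zero]; omega))
    (Or.inl (ENNReal.natCast_ne_top _))]
  rw [rOrd, reesOrder]
  refine le_sInf ?_
  rintro _ ⟨f, n, hf0, hn, hf, rfl⟩
  have hn0 : (n : ℝ≥0∞) ≠ 0 := by
    rw [Nat.cast_ne_zero]; omega
  rw [ENNReal.le_div_iff_mul_le (Or.inl hn0) (Or.inl (ENNReal.natCast_ne_top _))]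
  have key := aux_coeff (r * N) _ ?_ _ hf n
  · rw [Polynomial.coeff_C_mul_X_pow, if_pos rfl, ← aux_tOrd f hf0, ENat.toENNReal_coe] at key
    exact key
  · rintro p (⟨i, rfl⟩ | ⟨g, l, hg, -, rfl⟩) m
    · simp only [Polynomial.coeff_C_mul_X]
      split_ifs with h
      · simpa [h] using htheta i
      · simp
    · rw [Polynomial.coeff_C_mul_X_pow]
      split_ifs with h
      · rw [h]; exact helim g l hg
      · simp

end NashMult
end
end
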